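/- For n ≥ 1 and real numbers a, b with √(n−1) < a ≤ √n and b² = a²(n − a²)/(n(a² − n + 1)), the map f: ℝ^n → ℝ^{2n+1}, f(x_1,…,x_n) = (1/√n)(cos(a x_1), sin(a x_1), …, cos(a x_n), sin(a x_n), b(x_1+⋯+x_n)), is an isometric immersion (with respect to a suitable flat metric on ℝ^n) whose image lies in 𝕊^{2n−1} × ℝ ⊂ ℝ^{2n+1}, and satisfies Δf = -a²(f − ⟨f, ∂/∂t⟩ ∂/∂t), where ∂/∂t is the unit vector in the last coordinate direction. -/

import Mathlib

noncomputable section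

open scoped RealInnerProductSpace

abbrev Euc (n : ℕ) := EuclideanSpace ℝ (Fin n)

/-- Partial derivative in the `i`-th coordinate direction. -/
def pd {n : ℕ} {V : Type*} [NormedAddCommGroup V] [NormedSpace ℝ V]
    (i : Fin n) (f : Euc n → V) (x : Euc n) : V :=
  fderiv ℝ f x (EuclideanSpace.single i 1)

/-- The induced (first fundamental form) metric of an immersion `F`. -/
def indMetric {m N : ℕ} (F : Euc m → Euc N) (x : Euc m) :
    Matrix (Fin m) (Fin m) ℝ :=
  Matrix.of fun i j => ⟪pd i F x, pd j F x⟫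

/-- Orthogonal projection of `v ∈ ℝ^N` onto the tangent space `dF_x(T_x M)`. -/
def tproj {m N : ℕ} (F : Euc m → Euc N) (x : Euc m) (v : Euc N) : Euc N :=
  ∑ i, ∑ j, ((indMetric F x)⁻¹ i j * ⟪v, pd i F x⟫) • pd j F x

/-- Christoffel symbols of the induced metric. -/
def christoffel {m N : ℕ} (F : Euc m → Euc N) (x : Euc m) (k i j : Fin m) : ℝ :=
  (1 / 2) * ∑ l, (indMetric F x)⁻¹ k l *
    (pd i (fun y => indMetric F y j l) x + pd j (fun y => indMetric F y i l) x
      - pd l (fun y => indMetric F y i j) x)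

/-- Laplace–Beltrami operator of the metric induced by `F`, on scalar functions. -/
def lap {m N : ℕ} (F : Euc m → Euc N) (h : Euc m → ℝ) (x : Euc m) : ℝ :=
  ∑ i, ∑ j, (indMetric F x)⁻¹ i j *
    (pd i (fun y => pd j h y) x - ∑ k, christoffel F x k i j * pd k h x)

/-- Componentwise Laplace–Beltrami operator on `ℝ^N`-valued functions. -/
def lapV {m N : ℕ} (F : Euc m → Euc N) (G : Euc m → Euc N) (x : Euc m) : Euc N :=
  (WithLp.equiv 2 (Fin N → ℝ)).symm fun a => lap F (fun y => G y a) x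

/-- Mean curvature vector of the immersion `F` into Euclidean space. -/
def meanCurv {m N : ℕ} (F : Euc m → Euc N) (x : Euc m) : Euc N :=
  (m : ℝ)⁻¹ • ∑ i, ∑ j, (indMetric F x)⁻¹ i j •
    (pd i (fun y => pd j F y) x - tproj F x (pd i (fun y => pd j F y) x))

/-- `F` is a smooth immersion (hence an isometric immersion of `M` with the
induced metric into Euclidean space). -/
def IsImmersion {m N : ℕ} (F : Euc m → Euc N) : Prop :=
  ContDiff ℝ (⊤ : ℕ∞) F ∧ ∀ x, Function.Injective (fderiv ℝ F x)

/-- Projection of `ℝ^{n+k}` onto the first `n` coordinates. -/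
def projFst {n k : ℕ} (v : Euc (n + k)) : Euc (n + k) :=
  (WithLp.equiv 2 (Fin (n + k) → ℝ)).symm fun a => if (a : ℕ) < n then v a else 0

/-- Projection of `ℝ^{n+k}` onto the last `k` coordinates. -/
def projSnd {n k : ℕ} (v : Euc (n + k)) : Euc (n + k) :=
  (WithLp.equiv 2 (Fin (n + k) → ℝ)).symm fun a => if (a : ℕ) < n then 0 else v a

theorem sum_two_mul {M : Type*} [AddCommMonoid M] (n : ℕ) (F : Fin (2 * n) → M) :
    ∑ i, F i = ∑ k : Fin n, (F ⟨2 * k, by omega⟩ + F ⟨2 * k + 1, by omega⟩) := by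
  induction n with
  | zero => rfl
  | succ n ih =>
    have h1 : ∑ i, F i = (∑ i : Fin (2 * n), F ⟨i, by omega⟩) + F ⟨2 * n, by omega⟩
        + F ⟨2 * n + 1, by omega⟩ := by
      have := Fin.sum_univ_castSucc (n := 2 * n + 1) F
      refine this.trans ?_
      rw [Fin.sum_univ_castSucc]
      rfl
    rw [h1, ih, Fin.sum_univ_castSucc, add_assoc]
    rfl

theorem sum_two_mul_succ {M : Type*} [AddCommMonoid M] (n : ℕ) (F : Fin (2 * n + 1) → M) :
    ∑ i, F i = (∑ k : Fin n, (F ⟨2 * k, by omega⟩ + F ⟨2 * k + 1, by omega⟩))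
      + F (Fin.last (2 * n)) := by
  rw [Fin.sum_univ_castSucc, sum_two_mul]
  rfl

theorem coord_fderiv {n : ℕ} (k : Fin n) (x : Euc n) :
    HasFDerivAt (fun y : Euc n => y k) (EuclideanSpace.proj (𝕜 := ℝ) k : Euc n →L[ℝ] ℝ) x :=
  (EuclideanSpace.proj (𝕜 := ℝ) k : Euc n →L[ℝ] ℝ).hasFDerivAt

theorem cos_fderiv {n : ℕ} (a c : ℝ) (k : Fin n) (x v : Euc n) :
    fderiv ℝ (fun y : Euc n => c * Real.cos (a * y k)) x v
      = -(c * a * Real.sin (a * x k)) * v k := by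
  rw [((((coord_fderiv k x).const_mul a).cos).const_mul c).fderiv]
  simp
  ring

theorem sin_fderiv {n : ℕ} (a c : ℝ) (k : Fin n) (x v : Euc n) :
    fderiv ℝ (fun y : Euc n => c * Real.sin (a * y k)) x v
      = (c * a * Real.cos (a * x k)) * v k := by
  rw [((((coord_fderiv k x).const_mul a).sin).const_mul c).fderiv]
  simp
  ring

theorem sum_fderiv {n : ℕ} (c : ℝ) (x v : Euc n) :
    fderiv ℝ (fun y : Euc n => c * ∑ j, y j) x v = c * ∑ j, v j := by
  have h : HasFDerivAt (fun y : Euc n => ∑ j, y j)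
      (∑ j, (EuclideanSpace.proj (𝕜 := ℝ) j : Euc n →L[ℝ] ℝ)) x :=
    HasFDerivAt.fun_sum fun j _ => coord_fderiv j x
  rw [(h.const_mul c).fderiv]
  simp

theorem fderiv_coord {n N : ℕ} (f : Euc n → Euc N) (hd : Differentiable ℝ f) (x v : Euc n)
    (i : Fin N) : fderiv ℝ f x v i = fderiv ℝ (fun y => f y i) x v := by
  have := ((EuclideanSpace.proj (𝕜 := ℝ) i : Euc N →L[ℝ] ℝ).hasFDerivAt.comp x
    (hd x).hasFDerivAt).fderiv
  have h2 : (fun y => f y i) = (EuclideanSpace.proj (𝕜 := ℝ) i : Euc N →L[ℝ] ℝ) ∘ f := rfl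
  rw [h2, this]
  rfl

theorem lap_const {m N : ℕ} (F : Euc m → Euc N) (G : Matrix (Fin m) (Fin m) ℝ)
    (hG : ∀ x, indMetric F x = G) (h : Euc m → ℝ) (x : Euc m) :
    lap F h x = ∑ i, ∑ j, G⁻¹ i j * pd i (fun y => pd j h y) x := by
  have hc : ∀ k i j, christoffel F x k i j = 0 := by
    intro k i j
    simp [christoffel, hG, pd]
  simp [lap, hc, hG]

/-- The example: for `√(n−1) < a ≤ √n` and `b² = a²(n−a²)/(n(a²−n+1))`, the map
`f(x) = (1/√n)(cos(ax₁), sin(ax₁), …, cos(axₙ), sin(axₙ), b Σ xⱼ)` is an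
(isometric, for the induced metric) immersion of `ℝ^n` into `ℝ^{2n+1}` whose
image lies in the cylinder `𝕊^{2n−1} × ℝ`, and which satisfies
`Δf = -a²(f − ⟨f, ∂/∂t⟩ ∂/∂t)` where `∂/∂t` is the last coordinate direction. -/
theorem clifford_example {n : ℕ} (hn : 1 ≤ n) (a b : ℝ)
    (ha1 : Real.sqrt ((n : ℝ) - 1) < a) (ha2 : a ≤ Real.sqrt n)
    (hb : b ^ 2 = a ^ 2 * ((n : ℝ) - a ^ 2) / ((n : ℝ) * (a ^ 2 - (n : ℝ) + 1)))
    (f : Euc n → Euc (2 * n + 1))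
    (hf : ∀ x, f x = (WithLp.equiv 2 (Fin (2 * n + 1) → ℝ)).symm fun i =>
      if h : (i : ℕ) < 2 * n then
        (if (i : ℕ) % 2 = 0 then Real.cos (a * x ⟨(i : ℕ) / 2, by omega⟩)
          else Real.sin (a * x ⟨(i : ℕ) / 2, by omega⟩)) / Real.sqrt n
      else b * (∑ j, x j) / Real.sqrt n) :
    IsImmersion f ∧
      (∀ x, ∑ i : Fin (2 * n), (f x (Fin.castLE (by omega) i)) ^ 2 = 1) ∧
      (∀ x, lapV f f x = (-(a ^ 2)) •
        (f x - ⟪f x, EuclideanSpace.single (⟨2 * n, by omega⟩ : Fin (2 * n + 1)) (1 : ℝ)⟫ •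
          EuclideanSpace.single (⟨2 * n, by omega⟩ : Fin (2 * n + 1)) (1 : ℝ))) := by
  classical
  have hn' : (1 : ℝ) ≤ n := by exact_mod_cast hn
  have hn0 : (0 : ℝ) < n := by linarith
  have ha0 : 0 < a := lt_of_le_of_lt (Real.sqrt_nonneg _) ha1
  have ha : (n : ℝ) - 1 < a ^ 2 := by
    have := (Real.sqrt_lt' ha0).1 ha1
    exact this
  obtain ⟨c, hc⟩ : ∃ c : ℝ, c = (Real.sqrt n)⁻¹ := ⟨_, rfl⟩
  have hc2 : c ^ 2 * n = 1 := by
    rw [hc, inv_pow, Real.sq_sqrt hn0.le]; field_simp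
  have hc0 : c ≠ 0 := by
    rintro rfl; simp at hc2
  have fc : ∀ x (k : Fin n), f x ⟨2 * k, by omega⟩ = c * Real.cos (a * x k) := by
    intro x k
    have h1 : (2 * (k : ℕ)) / 2 = k := by omega
    simp [hf, h1, hc, div_eq_inv_mul]
  have fs : ∀ x (k : Fin n), f x ⟨2 * k + 1, by omega⟩ = c * Real.sin (a * x k) := by
    intro x k
    have h1 : (2 * (k : ℕ) + 1) / 2 = k := by omega
    have h2 : (2 * (k : ℕ) + 1) < 2 * n := by omega
    have h3 : (2 * (k : ℕ) + 1) % 2 = 1 := by omega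
    simp [hf, h1, h2, h3, hc, div_eq_inv_mul]
  have ft : ∀ x, f x ⟨2 * n, by omega⟩ = (c * b) * ∑ j, x j := by
    intro x
    simp [hf, hc, div_eq_inv_mul]
    ring
  have cases3 : ∀ i : Fin (2 * n + 1), (∃ k : Fin n, i = ⟨2 * k, by omega⟩) ∨
      (∃ k : Fin n, i = ⟨2 * k + 1, by omega⟩) ∨ i = ⟨2 * n, by omega⟩ := by
    intro i
    by_cases h : (i : ℕ) < 2 * n
    · rcases Nat.even_or_odd' (i : ℕ) with ⟨k, hk | hk⟩
      · exact Or.inl ⟨⟨k, by omega⟩, Fin.ext hk⟩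
      · exact Or.inr (Or.inl ⟨⟨k, by omega⟩, Fin.ext hk⟩)
    · exact Or.inr (Or.inr (Fin.ext (by have := i.2; simp; omega)))
  have hcoord : ∀ k : Fin n, ContDiff ℝ (⊤ : ℕ∞) (fun y : Euc n => y k) := fun k =>
    (EuclideanSpace.proj (𝕜 := ℝ) k : Euc n →L[ℝ] ℝ).contDiff
  have hsm : ContDiff ℝ (⊤ : ℕ∞) f := by
    rw [contDiff_euclidean]
    intro i
    rcases cases3 i with ⟨k, rfl⟩ | ⟨k, rfl⟩ | rfl
    · simp only [fc]
      exact contDiff_const.mul (contDiff_const.mul (hcoord k)).cos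
    · simp only [fs]
      exact contDiff_const.mul (contDiff_const.mul (hcoord k)).sin
    · simp only [ft]
      exact contDiff_const.mul (ContDiff.sum fun j _ => hcoord j)
  have hd : Differentiable ℝ f := hsm.differentiable (by simp)
  have dc : ∀ x v (k : Fin n), fderiv ℝ f x v ⟨2 * k, by omega⟩
      = -(c * a * Real.sin (a * x k)) * v k := by
    intro x v k
    rw [fderiv_coord f hd]
    simp only [fc]
    exact cos_fderiv a c k x v
  have ds : ∀ x v (k : Fin n), fderiv ℝ f x v ⟨2 * k + 1, by omega⟩
      = (c * a * Real.cos (a * x k)) * v k := by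
    intro x v k
    rw [fderiv_coord f hd]
    simp only [fs]
    exact sin_fderiv a c k x v
  have dt : ∀ x v, fderiv ℝ f x v ⟨2 * n, by omega⟩ = (c * b) * ∑ j, v j := by
    intro x v
    rw [fderiv_coord f hd]
    simp only [ft]
    exact sum_fderiv (c * b) x v
  have hinner : ∀ x v w, ⟪fderiv ℝ f x v, fderiv ℝ f x w⟫
      = c ^ 2 * a ^ 2 * ∑ k, v k * w k + c ^ 2 * b ^ 2 * ((∑ k, v k) * ∑ k, w k) := by
    intro x v w
    have hl : Fin.last (2 * n) = ⟨2 * n, by omega⟩ := rfl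
    rw [PiLp.inner_apply, sum_two_mul_succ, hl]
    simp only [dc, ds, dt, Finset.mul_sum (a := c ^ 2 * a ^ 2), RCLike.inner_apply, conj_trivial]
    congr 1
    · refine Finset.sum_congr rfl fun k _ => ?_
      linear_combination (c ^ 2 * a ^ 2 * v k * w k) * Real.sin_sq_add_cos_sq (a * x k)
    · ring
  obtain ⟨G, hGd⟩ : ∃ G : Matrix (Fin n) (Fin n) ℝ, G = Matrix.of fun i j =>
    (if i = j then c ^ 2 * a ^ 2 else 0) + c ^ 2 * b ^ 2 := ⟨_, rfl⟩
  have hG : ∀ x, indMetric f x = G := by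
    intro x
    ext i j
    simp only [indMetric, pd, Matrix.of_apply, hinner, hGd]
    simp [Finset.sum_ite_eq, Pi.single_apply, eq_comm]
  have hden : 0 < a ^ 2 + n * b ^ 2 := by positivity
  obtain ⟨d, hdd⟩ : ∃ d : ℝ, d = b ^ 2 / (a ^ 2 + n * b ^ 2) := ⟨_, rfl⟩
  have hGinv : G⁻¹ = Matrix.of fun i j => (n / a ^ 2) * ((if i = j then 1 else 0) - d) := by
    apply Matrix.inv_eq_right_inv
    ext i j
    have hc3 : c ^ 2 = 1 / n := by field_simp; exact hc2
    simp only [Matrix.mul_apply, hGd, Matrix.of_apply, Matrix.one_apply]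
    simp only [add_mul, mul_sub, ite_mul, mul_ite, zero_mul, mul_zero, Finset.sum_add_distrib,
      Finset.sum_sub_distrib, Finset.sum_ite_eq, Finset.sum_ite_eq', Finset.mem_univ, if_true,
      Finset.sum_const, Finset.card_univ, Fintype.card_fin, nsmul_eq_mul, sub_zero]
    rw [hc3, hdd]
    split_ifs <;> field_simp <;> ring
  have hdiag : (n / a ^ 2) * (1 - d) = 1 := by
    have h1 : 0 < a ^ 2 - (n : ℝ) + 1 := by linarith
    rw [eq_div_iff (by positivity)] at hb
    rw [hdd]
    field_simp
    linear_combination (-1) * hb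
  refine ⟨⟨hsm, ?_⟩, ?_, ?_⟩
  · intro x
    rw [injective_iff_map_eq_zero]
    intro v hv
    ext k
    have h1 := dc x v k
    have h2 := ds x v k
    rw [hv] at h1 h2
    simp only [PiLp.zero_apply] at h1 h2 ⊢
    have h3 : c * a * v k = 0 := by
      linear_combination (-(c * a * v k)) * Real.sin_sq_add_cos_sq (a * x k)
        + Real.sin (a * x k) * h1 - Real.cos (a * x k) * h2
    have h4 : c * a ≠ 0 := mul_ne_zero hc0 ha0.ne'
    exact (mul_eq_zero.1 h3).resolve_left h4
  · intro x
    rw [sum_two_mul]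
    have : ∀ k : Fin n, (f x ⟨2 * k, by omega⟩) ^ 2 + (f x ⟨2 * k + 1, by omega⟩) ^ 2 = c ^ 2 := by
      intro k
      rw [fc, fs]
      linear_combination c ^ 2 * Real.sin_sq_add_cos_sq (a * x k)
    refine (Finset.sum_congr rfl fun k _ => this k).trans ?_
    simp
    linarith
  · intro x
    have pds : ∀ (j k : Fin n), (EuclideanSpace.single j (1 : ℝ) : Euc n) k
        = if k = j then 1 else 0 := by
      intro j k; simp [Pi.single_apply]
    have key : ∀ (k : Fin n) (r : ℝ), (∑ i, ∑ j, G⁻¹ i j *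
        ((if k = j then 1 else 0) * ((if k = i then 1 else 0) * r))) = r := by
      intro k r
      have : G⁻¹ k k = 1 := by rw [hGinv]; simpa using hdiag
      simp [this]
    ext i
    simp only [lapV, WithLp.equiv_symm_apply]
    rw [lap_const f G hG]
    rcases cases3 i with ⟨k, rfl⟩ | ⟨k, rfl⟩ | rfl
    · have hne : (⟨2 * k, by omega⟩ : Fin (2 * n + 1)) ≠ ⟨2 * n, by omega⟩ := by
        simp; omega
      have h2 : ∀ i j, pd i (fun y => pd j (fun z => f z ⟨2 * k, by omega⟩) y) x
          = (if k = j then 1 else 0) * ((if k = i then 1 else 0) *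
            (-(a ^ 2) * (c * Real.cos (a * x k)))) := by
        intro i j
        have e : ∀ y, pd j (fun z => f z ⟨2 * k, by omega⟩) y
            = (-(c * a) * (if k = j then 1 else 0)) * Real.sin (a * y k) := by
          intro y
          simp only [fc, pd]
          rw [cos_fderiv, pds]
          ring
        simp only [e]
        rw [pd, sin_fderiv, pds]
        ring
      simp only [h2]
      rw [key]
      simp [fc, hne]
    · have hne : (⟨2 * k + 1, by omega⟩ : Fin (2 * n + 1)) ≠ ⟨2 * n, by omega⟩ := by
        simp; omega
      have h2 : ∀ i j, pd i (fun y => pd j (fun z => f z ⟨2 * k + 1, by omega⟩) y) x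
          = (if k = j then 1 else 0) * ((if k = i then 1 else 0) *
            (-(a ^ 2) * (c * Real.sin (a * x k)))) := by
        intro i j
        have e : ∀ y, pd j (fun z => f z ⟨2 * k + 1, by omega⟩) y
            = ((c * a) * (if k = j then 1 else 0)) * Real.cos (a * y k) := by
          intro y
          simp only [fs, pd]
          rw [sin_fderiv, pds]
          ring
        simp only [e]
        rw [pd, cos_fderiv, pds]
        ring
      simp only [h2]
      rw [key]
      simp [fs, hne]
    · have h2 : ∀ i j, pd i (fun y => pd j (fun z => f z ⟨2 * n, by omega⟩) y) x = 0 := by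
        intro i j
        simp only [ft, pd, sum_fderiv]
        simp
      simp only [h2]
      simp [EuclideanSpace.inner_single_right]
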